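/- (Remark 2.9: tensorization of T_1 without contraction.) Let (E,d) be a Polish metric space and ℙ a probability measure on E^n with P_i(·|x^{i-1}) ∈ T_1(C) for all i, x^{i-1}, and suppose W_1^d(P_i(·|x^{i-1}), P_i(·|x̃^{i-1})) ≤ Σ_{j=1}^{i-1} a_j · d(x_{i-j}, x̃_{i-j}) for some a_j ≥ 0 (no smallness assumption on Σ a_j). Then for any δ ∈ (0,1) there exists a vector z = (z_1,…,z_n) with z_i > 0, Σ_i z_i = 1 and Σ_{i=k+1}^n z_i a_{i−k} ≤ δ z_k for all k = 1,…,n; and for any such z and every probability measure ℚ on E^n, W_1^{d_{l_1}}(ℚ,ℙ) ≤ (1/((1−δ)·min_i z_i)) · √(2C·(max_i z_i)·H(ℚ|ℙ)). In particular ℙ satisfies T_1(C_n) on (E^n, d_{l_1}) for some finite constant C_n. -/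

import Mathlib

open MeasureTheory ProbabilityTheory ENNReal

noncomputable section

/-- `π` is a coupling of `μ` and `ν`. -/
def IsCoupling {E F : Type*} [MeasurableSpace E] [MeasurableSpace F]
    (π : Measure (E × F)) (μ : Measure E) (ν : Measure F) : Prop :=
  π.map Prod.fst = μ ∧ π.map Prod.snd = ν

/-- The `L^p`-Wasserstein distance associated to the cost function `d`, valued in `ℝ≥0∞`. -/
def wassersteinDist {E : Type*} [MeasurableSpace E] (p : ℝ) (d : E → E → ℝ)
    (μ ν : Measure E) : ℝ≥0∞ :=
  ⨅ (π : Measure (E × E)) (_ : IsCoupling π μ ν),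
    (∫⁻ z, ENNReal.ofReal (d z.1 z.2) ^ p ∂π) ^ (1 / p)

/-- The `L^p`-Wasserstein distance for an extended (`ℝ≥0∞`-valued) pseudo-metric `d`. -/
def wassersteinDistE {E : Type*} [MeasurableSpace E] (p : ℝ) (d : E → E → ℝ≥0∞)
    (μ ν : Measure E) : ℝ≥0∞ :=
  ⨅ (π : Measure (E × E)) (_ : IsCoupling π μ ν),
    (∫⁻ z, d z.1 z.2 ^ p ∂π) ^ (1 / p)

open Classical in
/-- Relative entropy (Kullback information) `H(ν | μ)`, valued in `ℝ≥0∞`. -/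
def relEntropy {E : Type*} [MeasurableSpace E] (ν μ : Measure E) : ℝ≥0∞ :=
  if ν ≪ μ ∧ Integrable (fun x => Real.log ((ν.rnDeriv μ x).toReal)) ν then
    ENNReal.ofReal (∫ x, Real.log ((ν.rnDeriv μ x).toReal) ∂ν)
  else ∞

/-- The transportation cost-information inequality `T_p(C)` for `μ` on `(E, d)`:
`W_p(μ, ν) ≤ √(2 C H(ν|μ))` for every probability measure `ν`, written in the equivalent
squared form `W_p(μ,ν)² ≤ 2C·H(ν|μ)` in `ℝ≥0∞`. -/
def TpIneq {E : Type*} [MeasurableSpace E] (p : ℝ) (d : E → E → ℝ) (C : ℝ)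
    (μ : Measure E) : Prop :=
  ∀ ν : Measure E, IsProbabilityMeasure ν →
    wassersteinDist p d μ ν ^ 2 ≤ ENNReal.ofReal (2 * C) * relEntropy ν μ

/-- The transportation cost-information inequality `T_p(C)` for an extended pseudo-metric. -/
def TpIneqE {E : Type*} [MeasurableSpace E] (p : ℝ) (d : E → E → ℝ≥0∞) (C : ℝ)
    (μ : Measure E) : Prop :=
  ∀ ν : Measure E, IsProbabilityMeasure ν →
    wassersteinDistE p d μ ν ^ 2 ≤ ENNReal.ofReal (2 * C) * relEntropy ν μ

/-- The law on `E^n` of the (in general non-homogeneous, non-Markovian) random sequence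
determined by the successive regular conditional laws `K i : (Fin i → E) → Measure E`
of the `(i+1)`-th coordinate given the first `i` coordinates. -/
def chainMeasure {E : Type*} [MeasurableSpace E]
    (K : (i : ℕ) → (Fin i → E) → Measure E) : (n : ℕ) → Measure (Fin n → E)
  | 0 => Measure.dirac (fun i => i.elim0)
  | n + 1 => (chainMeasure K n).bind fun x => (K n x).map (Fin.snoc x)

/-- Bounded measurable functions whose increments are dominated by `ρ`. -/
structure IsTestFunction {X : Type*} [MeasurableSpace X] (ρ : X → X → ℝ) (f : X → ℝ) : Prop where
  measurable : Measurable f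
  bounded : ∃ B, ∀ x, |f x| ≤ B
  sub_le : ∀ x y, f x - f y ≤ ρ x y

namespace IsTestFunction

variable {X : Type*} [MeasurableSpace X] {ρ : X → X → ℝ} {f : X → ℝ}

theorem integrable (hf : IsTestFunction ρ f) (μ : Measure X) [IsFiniteMeasure μ] :
    Integrable f μ := by
  obtain ⟨B, hB⟩ := hf.bounded
  exact Integrable.of_bound hf.measurable.aestronglyMeasurable B
    (Filter.Eventually.of_forall fun x => by simpa using hB x)

theorem integrable_exp (hf : IsTestFunction ρ f) (μ : Measure X) [IsFiniteMeasure μ] :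
    Integrable (fun x => Real.exp (f x)) μ := by
  obtain ⟨B, hB⟩ := hf.bounded
  exact Integrable.of_bound hf.measurable.exp.aestronglyMeasurable (Real.exp B)
    (Filter.Eventually.of_forall fun x => by
      simpa using (le_abs_self _).trans (hB x))

theorem const_mul (hf : IsTestFunction ρ f) {l : ℝ} (hl : 0 ≤ l) :
    IsTestFunction (fun x y => l * ρ x y) (fun x => l * f x) where
  measurable := hf.measurable.const_mul l
  bounded := by
    obtain ⟨B, hB⟩ := hf.bounded
    exact ⟨l * B, fun x => by
      rw [abs_mul, abs_of_nonneg hl]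
      exact mul_le_mul_of_nonneg_left (hB x) hl⟩
  sub_le x y := by
    rw [← mul_sub]
    exact mul_le_mul_of_nonneg_left (hf.sub_le x y) hl

theorem neg (hf : IsTestFunction ρ f) (hρ : ∀ x y, ρ x y = ρ y x) :
    IsTestFunction ρ (fun x => -f x) where
  measurable := hf.measurable.neg
  bounded := by simpa using hf.bounded
  sub_le x y := by
    have := hf.sub_le y x
    rw [hρ x y]
    linarith

end IsTestFunction

theorem wassersteinDist_one {X : Type*} [MeasurableSpace X] (d : X → X → ℝ) (μ ν : Measure X) :
    wassersteinDist 1 d μ ν =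
      ⨅ (π : Measure (X × X)) (_ : IsCoupling π μ ν), ∫⁻ z, ENNReal.ofReal (d z.1 z.2) ∂π := by
  simp [wassersteinDist]

theorem IsCoupling.isProbabilityMeasure {X : Type*} [MeasurableSpace X] {π : Measure (X × X)}
    {μ ν : Measure X} [IsProbabilityMeasure μ] (h : IsCoupling π μ ν) :
    IsProbabilityMeasure π := by
  have : IsProbabilityMeasure (π.map Prod.fst) := h.1 ▸ inferInstance
  exact Measure.isProbabilityMeasure_of_map Prod.fst

theorem IsCoupling.swap {X : Type*} [MeasurableSpace X] {π : Measure (X × X)}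
    {μ ν : Measure X} (h : IsCoupling π μ ν) : IsCoupling (π.map Prod.swap) ν μ := by
  constructor
  · rw [Measure.map_map measurable_fst measurable_swap]
    exact h.2
  · rw [Measure.map_map measurable_snd measurable_swap]
    exact h.1

theorem wassersteinDist_one_comm {X : Type*} [MeasurableSpace X] {d : X → X → ℝ}
    (hd : ∀ x y, d x y = d y x) (hdm : Measurable fun z : X × X => d z.1 z.2) (μ ν : Measure X) :
    wassersteinDist 1 d μ ν = wassersteinDist 1 d ν μ := by
  have key : ∀ μ ν : Measure X, wassersteinDist 1 d μ ν ≤ wassersteinDist 1 d ν μ := by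
    intro μ ν
    rw [wassersteinDist_one, wassersteinDist_one]
    refine le_iInf₂ fun π hπ => (iInf₂_le (π.map Prod.swap) hπ.swap).trans ?_
    rw [lintegral_map hdm.ennreal_ofReal measurable_swap]
    exact lintegral_mono fun z => by simp [hd z.1 z.2]
  exact le_antisymm (key _ _) (key _ _)

theorem IsTestFunction.integral_sub_integral_le_wassersteinDist {X : Type*} [MeasurableSpace X]
    {d : X → X → ℝ} (hd : ∀ x y, d x y = d y x) {L : ℝ} (hL : 0 ≤ L) {f : X → ℝ}
    (hf : IsTestFunction (fun x y => L * d x y) f) (μ ν : Measure X) [IsProbabilityMeasure μ]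
    [IsProbabilityMeasure ν] :
    ENNReal.ofReal (∫ x, f x ∂μ - ∫ x, f x ∂ν) ≤ ENNReal.ofReal L * wassersteinDist 1 d μ ν := by
  rcases hL.eq_or_lt with rfl | hL'
  · obtain ⟨x₀⟩ : Nonempty X := μ.nonempty_of_neZero
    have hconst : f = fun _ => f x₀ := by
      funext x
      have h1 := hf.sub_le x x₀
      have h2 := hf.sub_le x₀ x
      linarith
    rw [hconst]
    simp
  have hL0 : ENNReal.ofReal L ≠ 0 := by simpa using hL'
  rw [wassersteinDist_one]
  simp_rw [ENNReal.mul_iInf_of_ne hL0 ENNReal.ofReal_ne_top]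
  refine le_iInf₂ fun π hπ => ?_
  have := hπ.isProbabilityMeasure
  have h1 : ∫ x, f x ∂μ = ∫ z, f z.1 ∂π := by
    rw [← hπ.1, integral_map measurable_fst.aemeasurable hf.measurable.aestronglyMeasurable]
  have h2 : ∫ x, f x ∂ν = ∫ z, f z.2 ∂π := by
    rw [← hπ.2, integral_map measurable_snd.aemeasurable hf.measurable.aestronglyMeasurable]
  have hint : Integrable f (π.map Prod.fst) ∧ Integrable f (π.map Prod.snd) := by
    rw [hπ.1, hπ.2]
    exact ⟨hf.integrable μ, hf.integrable ν⟩
  have hint₁ : Integrable (fun z => f z.1) π := hint.1.comp_measurable measurable_fst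
  have hint₂ : Integrable (fun z => f z.2) π := hint.2.comp_measurable measurable_snd
  rw [h1, h2, ← integral_sub hint₁ hint₂, ← lintegral_const_mul' _ _ ENNReal.ofReal_ne_top]
  refine (ENNReal.ofReal_le_ofReal (Real.le_norm_self _)).trans ?_
  rw [ofReal_norm]
  refine (enorm_integral_le_lintegral_enorm _).trans (lintegral_mono fun z => ?_)
  rw [← ENNReal.ofReal_mul hL, ← ofReal_norm]
  refine ENNReal.ofReal_le_ofReal (abs_le.2 ⟨?_, hf.sub_le _ _⟩)
  have := hf.sub_le z.2 z.1
  simp only [hd z.2 z.1] at this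
  linarith

theorem relEntropy_eq_of_ne_top {X : Type*} [MeasurableSpace X] {ν μ : Measure X}
    [IsProbabilityMeasure μ] [IsProbabilityMeasure ν] (h : relEntropy ν μ ≠ ∞) :
    ν ≪ μ ∧ Integrable (llr ν μ) ν ∧ (relEntropy ν μ).toReal = ∫ x, llr ν μ x ∂ν := by
  unfold relEntropy at h ⊢
  split_ifs at h ⊢ with hh
  · refine ⟨hh.1, hh.2, ENNReal.toReal_ofReal ?_⟩
    have := InformationTheory.integral_llr_add_sub_measure_univ_nonneg hh.1 hh.2
    simpa only [probReal_univ, add_sub_cancel_right, llr_def] using this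
  · exact absurd rfl h

/-- One half of the Donsker–Varadhan variational formula. -/
theorem IsTestFunction.integral_le_relEntropy_add_log {X : Type*} [MeasurableSpace X]
    {ρ : X → X → ℝ} {f : X → ℝ} (hf : IsTestFunction ρ f) (ν μ : Measure X)
    [IsProbabilityMeasure μ] [IsProbabilityMeasure ν] (h : relEntropy ν μ ≠ ∞) :
    ∫ x, f x ∂ν ≤ (relEntropy ν μ).toReal + Real.log (∫ x, Real.exp (f x) ∂μ) := by
  obtain ⟨hac, hint, heq⟩ := relEntropy_eq_of_ne_top h
  have hexp := hf.integrable_exp μ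
  have := isProbabilityMeasure_tilted hexp
  have h1 := integral_llr_tilted_right hac (hf.integrable ν) hexp hint
  have h2 := InformationTheory.integral_llr_add_sub_measure_univ_nonneg
    (hac.trans (absolutelyContinuous_tilted hexp))
    (integrable_llr_tilted_right hac (hf.integrable ν) hint hexp)
  simp only [probReal_univ, add_sub_cancel_right] at h2
  rw [heq]
  linarith

/-- Exponential integrability of Lipschitz functions under `T₁`. -/
theorem TpIneq.integral_exp_le {X : Type*} [MeasurableSpace X]
    {d : X → X → ℝ} (hd : ∀ x y, d x y = d y x) {C : ℝ} (hC : 0 ≤ C) {μ : Measure X}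
    [IsProbabilityMeasure μ] (hT : TpIneq 1 d C μ) {L : ℝ} (hL : 0 ≤ L) {f : X → ℝ}
    (hf : IsTestFunction (fun x y => L * d x y) f) :
    ∫ x, Real.exp (f x) ∂μ ≤ Real.exp (∫ x, f x ∂μ + C * L ^ 2 / 2) := by
  have hexp := hf.integrable_exp μ
  have hprob := isProbabilityMeasure_tilted hexp
  have hpos : 0 < ∫ x, Real.exp (f x) ∂μ := integral_exp_pos hexp
  set ν := μ.tilted f with hν
  set Z := Real.log (∫ x, Real.exp (f x) ∂μ) with hZ
  have hac : ν ≪ μ := tilted_absolutelyContinuous μ f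
  have hllr : llr ν μ =ᵐ[ν] fun x => f x - Z := hac.ae_le (log_rnDeriv_tilted_left_self hexp)
  have hint : Integrable (llr ν μ) ν :=
    ((hf.integrable ν).sub (integrable_const Z)).congr hllr.symm
  have hne : relEntropy ν μ ≠ ∞ := by
    unfold relEntropy
    rw [if_pos ⟨hac, hint⟩]
    exact ENNReal.ofReal_ne_top
  obtain ⟨-, -, heq⟩ := relEntropy_eq_of_ne_top hne
  have hH : (relEntropy ν μ).toReal = ∫ x, f x ∂ν - Z := by
    rw [heq, integral_congr_ae hllr, integral_sub (hf.integrable ν) (integrable_const Z)]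
    simp
  set h := (relEntropy ν μ).toReal
  have hh : 0 ≤ h := ENNReal.toReal_nonneg
  have hle : ∫ x, f x ∂ν - ∫ x, f x ∂μ ≤ C * L ^ 2 / 2 + h := by
    by_contra! hlt
    have hD : 0 < ∫ x, f x ∂ν - ∫ x, f x ∂μ := lt_of_le_of_lt (by positivity) hlt
    have hdual := (hf.neg fun x y => by rw [hd]).integral_sub_integral_le_wassersteinDist hd hL μ ν
    have hsq := (pow_le_pow_left' hdual 2).trans_eq (mul_pow _ _ 2)
    have hsq2 := hsq.trans (mul_le_mul_right (hT ν hprob) _)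
    rw [← ENNReal.ofReal_toReal hne, ← ENNReal.ofReal_mul (by positivity),
      ← ENNReal.ofReal_pow hL, ← ENNReal.ofReal_mul (by positivity), integral_neg, integral_neg,
      ← ENNReal.ofReal_pow (by linarith), ENNReal.ofReal_le_ofReal_iff (by positivity)] at hsq2
    change _ ≤ L ^ 2 * (2 * C * h) at hsq2
    nlinarith [sq_nonneg (C * L ^ 2 / 2 - h), show 0 ≤ C * L ^ 2 / 2 + h by positivity]
  rw [← Real.log_le_iff_le_exp hpos]
  linarith

section Chain

variable {E : Type*} [MeasurableSpace E]

theorem measurable_finSnoc (n : ℕ) :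
    Measurable fun p : (Fin n → E) × E => (Fin.snoc p.1 p.2 : Fin (n + 1) → E) := by
  refine measurable_pi_iff.2 fun i => ?_
  induction i using Fin.lastCases with
  | last => simpa using measurable_snd
  | cast i => simpa [Function.comp_def] using (measurable_pi_apply i).comp measurable_fst

theorem measurable_map_finSnoc {n : ℕ} {κ : (Fin n → E) → Measure E} (hκ : Measurable κ)
    (hp : ∀ x, IsProbabilityMeasure (κ x)) :
    Measurable fun x => (κ x).map (fun y => (Fin.snoc x y : Fin (n + 1) → E)) := by
  refine Measure.measurable_of_measurable_coe _ fun s hs => ?_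
  have hm : ∀ x : Fin n → E, Measurable fun y => (Fin.snoc x y : Fin (n + 1) → E) := fun x =>
    (measurable_finSnoc n).comp measurable_prodMk_left
  simp_rw [fun x => Measure.map_apply (μ := κ x) (hm x) hs]
  let κ' : Kernel (Fin n → E) E := ⟨κ, hκ⟩
  have : IsMarkovKernel κ' := ⟨hp⟩
  exact Kernel.measurable_kernel_prodMk_left (κ := κ') (measurable_finSnoc n hs)

theorem chainMeasure_succ_eq {K : (i : ℕ) → (Fin i → E) → Measure E}
    (hKm : ∀ i, Measurable (K i)) (hKp : ∀ i x, IsProbabilityMeasure (K i x)) (n : ℕ)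
    [SFinite (chainMeasure K n)] :
    chainMeasure K (n + 1) =
      ((chainMeasure K n) ⊗ₘ (⟨K n, hKm n⟩ : Kernel (Fin n → E) E)).map
        fun p => (Fin.snoc p.1 p.2 : Fin (n + 1) → E) := by
  have : IsMarkovKernel (⟨K n, hKm n⟩ : Kernel (Fin n → E) E) := ⟨hKp n⟩
  ext s hs
  rw [Measure.map_apply (measurable_finSnoc n) hs,
    Measure.compProd_apply (measurable_finSnoc n hs), chainMeasure,
    Measure.bind_apply hs (measurable_map_finSnoc (hKm n) (hKp n)).aemeasurable]
  refine lintegral_congr fun x => ?_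
  exact Measure.map_apply ((measurable_finSnoc n).comp measurable_prodMk_left) hs

theorem isProbabilityMeasure_chainMeasure {K : (i : ℕ) → (Fin i → E) → Measure E}
    (hKm : ∀ i, Measurable (K i)) (hKp : ∀ i x, IsProbabilityMeasure (K i x)) (n : ℕ) :
    IsProbabilityMeasure (chainMeasure K n) := by
  induction n with
  | zero =>
    rw [chainMeasure]
    infer_instance
  | succ n ih =>
    rw [chainMeasure_succ_eq hKm hKp n]
    have : IsMarkovKernel (⟨K n, hKm n⟩ : Kernel (Fin n → E) E) := ⟨hKp n⟩
    exact Measure.isProbabilityMeasure_map (measurable_finSnoc n).aemeasurable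

theorem integral_chainMeasure_succ {K : (i : ℕ) → (Fin i → E) → Measure E}
    (hKm : ∀ i, Measurable (K i)) (hKp : ∀ i x, IsProbabilityMeasure (K i x)) (n : ℕ)
    {f : (Fin (n + 1) → E) → ℝ} (hfm : Measurable f)
    (hf : Integrable f (chainMeasure K (n + 1))) :
    ∫ x, f x ∂(chainMeasure K (n + 1)) =
      ∫ x, ∫ y, f (Fin.snoc x y) ∂(K n x) ∂(chainMeasure K n) := by
  have := isProbabilityMeasure_chainMeasure hKm hKp n
  have : IsMarkovKernel (⟨K n, hKm n⟩ : Kernel (Fin n → E) E) := ⟨hKp n⟩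
  rw [chainMeasure_succ_eq hKm hKp n] at hf ⊢
  rw [integral_map (measurable_finSnoc n).aemeasurable hfm.aestronglyMeasurable,
    Measure.integral_compProd]
  · rfl
  · exact hf.comp_measurable (measurable_finSnoc n)

theorem measurable_integral_finSnoc {n : ℕ} {κ : (Fin n → E) → Measure E} (hκ : Measurable κ)
    (hp : ∀ x, IsProbabilityMeasure (κ x)) {f : (Fin (n + 1) → E) → ℝ} (hf : Measurable f) :
    Measurable fun x => ∫ y, f (Fin.snoc x y) ∂(κ x) := by
  let κ' : Kernel (Fin n → E) E := ⟨κ, hκ⟩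
  have : IsMarkovKernel κ' := ⟨hp⟩
  exact ((hf.comp (measurable_finSnoc n)).stronglyMeasurable.integral_kernel_prod_right'
    (κ := κ')).measurable

theorem Fin.sum_Ioi_castSucc {n : ℕ} (k : Fin n) (φ : Fin (n + 1) → ℝ) :
    ∑ i ∈ Finset.Ioi k.castSucc, φ i = ∑ i ∈ Finset.Ioi k, φ i.castSucc + φ (Fin.last n) := by
  have h : ∀ {m : ℕ} (k : Fin m), Finset.Ioi k = Finset.univ.filter (k < ·) := fun k => by
    ext; simp
  rw [h, h, Finset.sum_filter, Finset.sum_filter, Fin.sum_univ_castSucc]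
  simp [Fin.castSucc_lt_last]

end Chain

/-- Sub-Gaussian concentration of Lipschitz functions of a dependent sequence whose conditional
laws satisfy `T₁(C)` and depend on the past in a Lipschitz way. -/
theorem integral_exp_chainMeasure_le {E : Type*} [MeasurableSpace E] [MetricSpace E]
    {C : ℝ} (hC : 0 ≤ C) {K : (i : ℕ) → (Fin i → E) → Measure E}
    (hKm : ∀ i, Measurable (K i)) (hKp : ∀ i x, IsProbabilityMeasure (K i x))
    (hT : ∀ (i : ℕ) (x : Fin i → E), TpIneq 1 dist C (K i x))
    {a : ℕ → ℝ} (ha : ∀ j, 0 ≤ a j)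
    (hC1 : ∀ (i : ℕ) (x x' : Fin i → E),
      wassersteinDist 1 dist (K i x) (K i x') ≤
        ENNReal.ofReal (∑ k : Fin i, a (i - (k : ℕ)) * dist (x k) (x' k)))
    (n : ℕ) (L g : Fin n → ℝ) (hL : ∀ k, 0 ≤ L k)
    (hg : ∀ k, L k + ∑ i ∈ Finset.Ioi k, g i * a ((i : ℕ) - (k : ℕ)) ≤ g k)
    (f : (Fin n → E) → ℝ) (hf : IsTestFunction (fun x y => ∑ i, L i * dist (x i) (y i)) f) :
    ∫ x, Real.exp (f x) ∂(chainMeasure K n) ≤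
      Real.exp (∫ x, f x ∂(chainMeasure K n) + C / 2 * ∑ i, g i ^ 2) := by
  induction n with
  | zero =>
    have hconst : f = fun _ => f Fin.elim0 := funext fun x => congrArg f (Subsingleton.elim _ _)
    have := isProbabilityMeasure_chainMeasure hKm hKp 0
    rw [hconst]
    simp
  | succ n ih =>
    have hP := isProbabilityMeasure_chainMeasure hKm hKp n
    have hP' := isProbabilityMeasure_chainMeasure hKm hKp (n + 1)
    set G := g (Fin.last n)
    have hLG : L (Fin.last n) ≤ G := by
      have := hg (Fin.last n)
      rwa [Finset.sum_eq_zero, add_zero] at this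
      intro i hi
      exact absurd (Finset.mem_Ioi.1 hi) (Fin.le_last i).not_gt
    have hG : 0 ≤ G := (hL _).trans hLG
    have hsec : ∀ x : Fin n → E,
        IsTestFunction (fun y y' => G * dist y y') fun y => f (Fin.snoc x y) := fun x =>
      { measurable := hf.measurable.comp ((measurable_finSnoc n).comp measurable_prodMk_left)
        bounded := hf.bounded.imp fun B hB y => hB _
        sub_le := fun y y' => (hf.sub_le _ _).trans (by
          rw [Fin.sum_univ_castSucc]
          simp only [Fin.snoc_castSucc, dist_self, mul_zero, Finset.sum_const_zero, zero_add,
            Fin.snoc_last]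
          exact mul_le_mul_of_nonneg_right hLG dist_nonneg) }
    set f' : (Fin n → E) → ℝ := fun x => ∫ y, f (Fin.snoc x y) ∂(K n x) with hf'
    set L' : Fin n → ℝ := fun j => L j.castSucc + G * a (n - (j : ℕ)) with hL'
    have htest : IsTestFunction (fun x y => ∑ i, L' i * dist (x i) (y i)) f' :=
      { measurable := measurable_integral_finSnoc (hKm n) (hKp n) hf.measurable
        bounded := by
          obtain ⟨B, hB⟩ := hf.bounded
          refine ⟨B, fun x => ?_⟩
          have := norm_integral_le_of_norm_le_const (μ := K n x)
            (f := fun y => f (Fin.snoc x y)) (C := B) (Filter.Eventually.of_forall fun y => hB _)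
          simpa using this
        sub_le := fun x x' => by
          have h1 : ∫ y, f (Fin.snoc x y) ∂(K n x) ≤ ∫ y, f (Fin.snoc x' y) ∂(K n x) +
              ∑ i, L i.castSucc * dist (x i) (x' i) := by
            have : ∫ y, f (Fin.snoc x y) ∂(K n x) ≤ ∫ y, (f (Fin.snoc x' y) +
                ∑ i, L i.castSucc * dist (x i) (x' i)) ∂(K n x) := by
              refine integral_mono ((hsec x).integrable _)
                (((hsec x').integrable _).add (integrable_const _)) fun y => ?_
              have := hf.sub_le (Fin.snoc x y) (Fin.snoc x' y)
              rw [Fin.sum_univ_castSucc] at this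
              simp only [Fin.snoc_castSucc, dist_self, mul_zero, add_zero, Fin.snoc_last] at this
              linarith
            rwa [integral_add ((hsec x').integrable _) (integrable_const _), integral_const,
              probReal_univ, one_smul] at this
          have h2 : ∫ y, f (Fin.snoc x' y) ∂(K n x) - ∫ y, f (Fin.snoc x' y) ∂(K n x') ≤
              G * ∑ k : Fin n, a (n - (k : ℕ)) * dist (x k) (x' k) := by
            have hs : 0 ≤ ∑ k : Fin n, a (n - (k : ℕ)) * dist (x k) (x' k) :=
              Finset.sum_nonneg fun k _ => mul_nonneg (ha _) dist_nonneg
            have := ((hsec x').integral_sub_integral_le_wassersteinDist dist_comm hG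
              (K n x) (K n x')).trans (mul_le_mul_right (hC1 n x x') _)
            rw [← ENNReal.ofReal_mul hG] at this
            exact (ENNReal.ofReal_le_ofReal_iff (by positivity)).1 this
          have h3 : ∑ i, L' i * dist (x i) (x' i) = ∑ i, L i.castSucc * dist (x i) (x' i) +
              G * ∑ k : Fin n, a (n - (k : ℕ)) * dist (x k) (x' k) := by
            rw [Finset.mul_sum, ← Finset.sum_add_distrib]
            exact Finset.sum_congr rfl fun i _ => by simp only [hL']; ring
          simp only [hf']
          linarith }
    have hind := ih L' (fun j => g j.castSucc) (fun j => add_nonneg (hL _) (mul_nonneg hG (ha _)))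
      (fun k => by
        have := hg k.castSucc
        rw [Fin.sum_Ioi_castSucc] at this
        simp only [Fin.val_castSucc, Fin.val_last] at this
        simp only [hL']
        linarith) f' htest
    rw [integral_chainMeasure_succ hKm hKp n hf.measurable.exp (hf.integrable_exp _),
      integral_chainMeasure_succ hKm hKp n hf.measurable (hf.integrable _),
      Fin.sum_univ_castSucc]
    calc ∫ x, ∫ y, Real.exp (f (Fin.snoc x y)) ∂(K n x) ∂(chainMeasure K n)
        ≤ ∫ x, Real.exp (f' x) * Real.exp (C * G ^ 2 / 2) ∂(chainMeasure K n) := by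
          refine integral_mono_of_nonneg (Filter.Eventually.of_forall fun x =>
            integral_nonneg fun y => (Real.exp_pos _).le)
            ((htest.integrable_exp _).mul_const _) (Filter.Eventually.of_forall fun x => ?_)
          simp only [← Real.exp_add]
          exact (hT n x).integral_exp_le dist_comm hC hG (hsec x)
      _ = (∫ x, Real.exp (f' x) ∂(chainMeasure K n)) * Real.exp (C * G ^ 2 / 2) :=
          integral_mul_const _ _
      _ ≤ Real.exp (∫ x, f' x ∂(chainMeasure K n) + C / 2 * ∑ i : Fin n, g i.castSucc ^ 2) *
            Real.exp (C * G ^ 2 / 2) := mul_le_mul_of_nonneg_right hind (Real.exp_pos _).le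
      _ = _ := by
          rw [← Real.exp_add]
          congr 1
          ring

/-- A real cost which is a measurable pseudo-metric. -/
structure IsPseudoMetricCost {X : Type*} [MeasurableSpace X] (d : X → X → ℝ) : Prop where
  self : ∀ x, d x x = 0
  comm : ∀ x y, d x y = d y x
  triangle : ∀ x y z, d x z ≤ d x y + d y z
  measurable : Measurable fun z : X × X => d z.1 z.2

theorem IsPseudoMetricCost.nonneg {X : Type*} [MeasurableSpace X] {d : X → X → ℝ}
    (hd : IsPseudoMetricCost d) (x y : X) : 0 ≤ d x y := by
  have h1 := hd.triangle x y x
  rw [hd.self, hd.comm y x] at h1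
  linarith

/-- The largest `d`-Lipschitz minorant of prescribed values on a finite family of points. -/
theorem exists_lipschitz_between {ι X : Type*} [Fintype ι] [Nonempty ι] {d : X → X → ℝ}
    (htri : ∀ x y z, d x z ≤ d x y + d y z) (r : ι → X) (b : ι → ℝ) :
    ∃ g : X → ℝ, (∀ x y, g x - g y ≤ d x y) ∧ (∀ x t, g x ≤ d x (r t) + b t) ∧
      (∀ x a, (∀ t, a ≤ d x (r t) + b t) → a ≤ g x) ∧
      g = fun x => Finset.univ.inf' Finset.univ_nonempty fun t => d x (r t) + b t := by
  refine ⟨fun x => Finset.univ.inf' Finset.univ_nonempty fun t => d x (r t) + b t,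
    fun x y => ?_, fun x t => Finset.inf'_le _ (Finset.mem_univ t),
    fun x a h => Finset.le_inf' _ _ fun t _ => h t, rfl⟩
  obtain ⟨t, -, ht⟩ := Finset.exists_mem_eq_inf' (Finset.univ_nonempty (α := ι))
    fun t => d y (r t) + b t
  have h1 : (Finset.univ.inf' Finset.univ_nonempty fun t => d x (r t) + b t) ≤
    d x (r t) + b t := Finset.inf'_le _ (Finset.mem_univ t)
  have := htri x y (r t)
  linarith

/-- Kantorovich–Rubinstein duality on a finite set. -/
theorem exists_transport_plan_of_finite {S : Type*} [Fintype S] {d : S → S → ℝ}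
    (hd0 : ∀ s, d s s = 0) (htri : ∀ x y z, d x z ≤ d x y + d y z) {p q : S → ℝ}
    (hp : ∀ s, 0 ≤ p s) (hq : ∀ s, 0 ≤ q s) (hp1 : ∑ s, p s = 1) (hq1 : ∑ s, q s = 1) {c : ℝ}
    (h : ∀ g : S → ℝ, (∀ s t, g s - g t ≤ d s t) → ∑ s, g s * p s - ∑ s, g s * q s ≤ c) :
    ∃ w : S → S → ℝ, (∀ s t, 0 ≤ w s t) ∧ (∀ s, ∑ t, w s t = p s) ∧ (∀ t, ∑ s, w s t = q t) ∧
      ∑ s, ∑ t, w s t * d s t ≤ c := by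
  classical
  have : Nonempty S := by
    by_contra hS
    rw [not_nonempty_iff] at hS
    simp at hp1
  let Φ : (S × S → ℝ) →ₗ[ℝ] (S → ℝ) × (S → ℝ) × ℝ :=
    { toFun := fun w => (fun s => ∑ t, w (s, t), fun t => ∑ s, w (s, t),
        ∑ s, ∑ t, w (s, t) * d s t)
      map_add' := fun w w' => by
        simp only [Pi.add_apply, Finset.sum_add_distrib, add_mul]
        rfl
      map_smul' := fun m w => by
        simp only [Pi.smul_apply, smul_eq_mul, ← Finset.mul_sum, mul_assoc]
        rfl }
  have hΦ : Continuous Φ := Φ.continuous_of_finiteDimensional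
  let M := Φ '' stdSimplex ℝ (S × S)
  let N : Set ((S → ℝ) × (S → ℝ) × ℝ) := {p} ×ˢ ({q} ×ˢ Set.Iic c)
  by_cases hdisj : Disjoint M N
  · exfalso
    obtain ⟨F, u, v, hFM, huv, hFN⟩ := geometric_hahn_banach_compact_closed
      ((convex_stdSimplex ℝ (S × S)).linear_image Φ) ((isCompact_stdSimplex ℝ (S × S)).image hΦ)
      ((convex_singleton p).prod ((convex_singleton q).prod (convex_Iic c)))
      (isClosed_singleton.prod (isClosed_singleton.prod isClosed_Iic)) hdisj
    set l := F (0, 0, 1) with hl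
    set α : S → ℝ := fun s => F (Pi.single s 1, 0, 0) with hα
    set β : S → ℝ := fun s => F (0, Pi.single s 1, 0) with hβ
    have hsingle : ∀ s : S, (fun j => if s = j then (1 : ℝ) else 0) = Pi.single s 1 := fun s => by
      ext j
      simp [Pi.single_apply, eq_comm]
    have hF : ∀ x y r, F (x, y, r) = ∑ s, α s * x s + ∑ s, β s * y s + l * r := by
      intro x y r
      have h1 : ∑ s, α s * x s = F (x, 0, 0) := by
        have := (F.toLinearMap.comp (LinearMap.inl ℝ (S → ℝ) ((S → ℝ) × ℝ))).pi_apply_eq_sum_univ x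
        simp only [LinearMap.comp_apply, LinearMap.inl_apply, smul_eq_mul] at this
        refine Eq.trans (Finset.sum_congr rfl fun s _ => ?_) this.symm
        rw [mul_comm, hsingle s]
        rfl
      have h2 : ∑ s, β s * y s = F (0, y, 0) := by
        have := (F.toLinearMap.comp ((LinearMap.inr ℝ (S → ℝ) ((S → ℝ) × ℝ)).comp
          (LinearMap.inl ℝ (S → ℝ) ℝ))).pi_apply_eq_sum_univ y
        simp only [LinearMap.comp_apply, LinearMap.inl_apply, LinearMap.inr_apply,
          smul_eq_mul] at this
        refine Eq.trans (Finset.sum_congr rfl fun s _ => ?_) this.symm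
        rw [mul_comm, hsingle s]
        rfl
      have h3 : l * r = F (0, 0, r) := by
        rw [mul_comm, ← smul_eq_mul, hl, ← map_smul]
        simp
      rw [h1, h2, h3, ← map_add, ← map_add]
      simp
    have hcost : ∀ s t, α s + β t + l * d s t < u := by
      intro s t
      have := hFM _ ⟨Pi.single (s, t) 1, single_mem_stdSimplex ℝ (s, t), rfl⟩
      have he : Φ (Pi.single (s, t) 1) = (Pi.single s 1, Pi.single t 1, d s t) := by
        refine Prod.ext ?_ (Prod.ext ?_ ?_)
        · ext s'
          change ∑ t', (Pi.single (s, t) 1 : S × S → ℝ) (s', t') = _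
          by_cases hs : s' = s <;> simp [Pi.single_apply, hs]
        · ext t'
          change ∑ s', (Pi.single (s, t) 1 : S × S → ℝ) (s', t') = _
          by_cases hs : t' = t <;> simp [Pi.single_apply, hs]
        · change ∑ s', ∑ t', (Pi.single (s, t) 1 : S × S → ℝ) (s', t') * d s' t' = _
          rw [← Fintype.sum_prod_type' fun s' t' =>
            (Pi.single (s, t) 1 : S × S → ℝ) (s', t') * d s' t']
          simp [Pi.single_apply]
      rw [he, hF] at this
      simpa [Pi.single_apply] using this
    have hmem : ∀ r, r ≤ c → v < F (p, q, r) := fun r hr => hFN _ ⟨rfl, rfl, hr⟩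
    have hprod : ∃ c₀, F (p, q, c₀) < u := by
      refine ⟨∑ s, ∑ t, p s * q t * d s t, hFM _ ⟨fun z => p z.1 * q z.2, ⟨fun z =>
        mul_nonneg (hp _) (hq _), ?_⟩, ?_⟩⟩
      · rw [Fintype.sum_prod_type]
        simp [← Finset.mul_sum, hq1, hp1]
      · refine Prod.ext ?_ (Prod.ext ?_ rfl)
        · ext s
          change ∑ t, p s * q t = p s
          rw [← Finset.mul_sum, hq1, mul_one]
        · ext t
          change ∑ s, p s * q t = q t
          rw [← Finset.sum_mul, hp1, one_mul]
    obtain ⟨c₀, hc₀⟩ := hprod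
    have hc : c < c₀ := by
      by_contra! hle
      linarith [hmem c₀ hle]
    have hFc := hmem c le_rfl
    rw [hF] at hFc hc₀
    have hlneg : l < 0 := by
      by_contra! hl0
      have := mul_le_mul_of_nonneg_left hc.le hl0
      linarith
    obtain ⟨g, hgl, hgle, hleg, -⟩ := exists_lipschitz_between htri (id : S → S)
      fun t => (β t - u) / l
    have hgα : ∀ s, α s / -l ≤ g s := by
      intro s
      refine hleg s _ fun t => ?_
      have hl0 : l ≠ 0 := hlneg.ne
      have h0 : d s (id t) + (β t - u) / l - α s / -l = (α s + β t + l * d s t - u) / l := by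
        simp only [id]
        field_simp
        ring
      rw [← sub_nonneg, h0]
      exact div_nonneg_of_nonpos (by linarith [hcost s t]) hlneg.le
    have hgβ : ∀ s, g s ≤ (β s - u) / l := fun s => by simpa [hd0] using hgle s s
    have h1 : ∑ s, α s / -l * p s ≤ ∑ s, g s * p s :=
      Finset.sum_le_sum fun s _ => mul_le_mul_of_nonneg_right (hgα s) (hp s)
    have h2 : ∑ s, g s * q s ≤ ∑ s, (β s - u) / l * q s :=
      Finset.sum_le_sum fun s _ => mul_le_mul_of_nonneg_right (hgβ s) (hq s)
    have h3 : ∑ s, α s / -l * p s = (∑ s, α s * p s) / -l := by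
      rw [Finset.sum_div]
      exact Finset.sum_congr rfl fun s _ => by ring
    have h4 : ∑ s, (β s - u) / l * q s = (∑ s, β s * q s - u) / l := by
      have : ∑ s, u * q s = u := by rw [← Finset.mul_sum, hq1, mul_one]
      nth_rewrite 2 [← this]
      rw [← Finset.sum_sub_distrib, Finset.sum_div]
      exact Finset.sum_congr rfl fun s _ => by ring
    have h5 : c < (∑ s, α s * p s) / -l - (∑ s, β s * q s - u) / l := by
      have : (∑ s, α s * p s) / -l - (∑ s, β s * q s - u) / l =
        (∑ s, α s * p s + ∑ s, β s * q s - u) / -l := by field_simp; ring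
      rw [this, lt_div_iff₀ (by linarith)]
      linarith
    have := h g hgl
    linarith
  · obtain ⟨_, ⟨w, hw, rfl⟩, hN⟩ := Set.not_disjoint_iff.1 hdisj
    exact ⟨fun s t => w (s, t), fun s t => hw.1 _, fun s => congrFun hN.1 s,
      fun t => congrFun hN.2.1 t, hN.2.2⟩

theorem ae_measure_fiber_ne_zero {X S : Type*} [MeasurableSpace X] [Countable S] (μ : Measure X)
    (T : X → S) :
    ∀ᵐ x ∂μ, μ (T ⁻¹' {T x}) ≠ 0 := by
  have h : {x | ¬ μ (T ⁻¹' {T x}) ≠ 0} ⊆ ⋃ s ∈ {s | μ (T ⁻¹' {s}) = 0}, T ⁻¹' {s} := by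
    intro x hx
    simp only [Set.mem_iUnion]
    exact ⟨T x, by simpa using hx, rfl⟩
  exact measure_mono_null h ((measure_biUnion_null_iff (Set.to_countable _)).2 fun s hs => hs)

section Quantization

variable {X S : Type*} [MeasurableSpace X] [Fintype S] [MeasurableSpace S]
  [MeasurableSingletonClass S]

theorem lintegral_comp_eq_sum (μ : Measure X) {T : X → S} (hT : Measurable T) (φ : S → ℝ≥0∞) :
    ∫⁻ x, φ (T x) ∂μ = ∑ s, φ s * μ (T ⁻¹' {s}) := by
  rw [← lintegral_map (measurable_of_countable φ) hT, lintegral_fintype]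
  exact Finset.sum_congr rfl fun s _ => by rw [Measure.map_apply hT (measurableSet_singleton s)]

theorem lintegral_div_measureReal_fiber (ν : Measure X) [IsProbabilityMeasure ν] {T : X → S}
    (hT : Measurable T) {w : S → ℝ} (hw : ∀ t, 0 ≤ w t)
    (hw0 : ∀ t, ν.real (T ⁻¹' {t}) = 0 → w t = 0) {m : ℝ} (hm : 0 < m) (hsum : ∑ t, w t = m) :
    ∫⁻ y, ENNReal.ofReal (w (T y) / (m * ν.real (T ⁻¹' {T y}))) ∂ν = 1 := by
  rw [lintegral_comp_eq_sum ν hT fun t => ENNReal.ofReal (w t / (m * ν.real (T ⁻¹' {t})))]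
  have : ∀ t, ENNReal.ofReal (w t / (m * ν.real (T ⁻¹' {t}))) * ν (T ⁻¹' {t}) =
      ENNReal.ofReal (w t / m) := by
    intro t
    rw [← ofReal_measureReal, ← ENNReal.ofReal_mul (by have := hw t; positivity)]
    congr 1
    by_cases h0 : ν.real (T ⁻¹' {t}) = 0
    · simp [h0, hw0 t h0]
    · field_simp
  simp_rw [this]
  rw [← ENNReal.ofReal_sum_of_nonneg fun t _ => div_nonneg (hw t) hm.le, ← Finset.sum_div, hsum,
    div_self hm.ne', ENNReal.ofReal_one]

/-- A transport plan between the laws of `T` lifts to a coupling of the original measures. -/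
theorem exists_isCoupling_of_transport_plan (μ ν : Measure X) [IsProbabilityMeasure μ]
    [IsProbabilityMeasure ν] {T : X → S} (hT : Measurable T) {w : S → S → ℝ}
    (hw : ∀ s t, 0 ≤ w s t) (hw₁ : ∀ s, ∑ t, w s t = μ.real (T ⁻¹' {s}))
    (hw₂ : ∀ t, ∑ s, w s t = ν.real (T ⁻¹' {t})) :
    ∃ π : Measure (X × X), IsCoupling π μ ν ∧ ∀ φ : S → S → ℝ, (∀ s t, 0 ≤ φ s t) →
      ∫⁻ z, ENNReal.ofReal (φ (T z.1) (T z.2)) ∂π ≤ ENNReal.ofReal (∑ s, ∑ t, w s t * φ s t) := by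
  set W : X × X → ℝ≥0∞ := fun z => ENNReal.ofReal
    (w (T z.1) (T z.2) / (μ.real (T ⁻¹' {T z.1}) * ν.real (T ⁻¹' {T z.2}))) with hW
  have hWm : Measurable W := by
    have h1 : Measurable fun z : S × S => ENNReal.ofReal
        (w z.1 z.2 / (μ.real (T ⁻¹' {z.1}) * ν.real (T ⁻¹' {z.2}))) := measurable_of_countable _
    exact h1.comp ((hT.comp measurable_fst).prodMk (hT.comp measurable_snd))
  have hz₁ : ∀ s t, μ.real (T ⁻¹' {s}) = 0 → w s t = 0 := fun s t h =>
    (Finset.sum_eq_zero_iff_of_nonneg fun t _ => hw s t).1 ((hw₁ s).trans h) t (Finset.mem_univ t)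
  have hz₂ : ∀ s t, ν.real (T ⁻¹' {t}) = 0 → w s t = 0 := fun s t h =>
    (Finset.sum_eq_zero_iff_of_nonneg fun s _ => hw s t).1 ((hw₂ t).trans h) s (Finset.mem_univ s)
  have hpos : ∀ {ρ : Measure X} [IsProbabilityMeasure ρ] {s : S}, ρ (T ⁻¹' {s}) ≠ 0 →
      0 < ρ.real (T ⁻¹' {s}) := fun h => ENNReal.toReal_pos h (measure_ne_top _ _)
  have hfst : ∀ᵐ x ∂μ, ∫⁻ y, W (x, y) ∂ν = 1 := by
    filter_upwards [ae_measure_fiber_ne_zero μ T] with x hx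
    exact lintegral_div_measureReal_fiber ν hT (hw (T x)) (hz₂ (T x)) (hpos hx) (hw₁ (T x))
  have hsnd : ∀ᵐ y ∂ν, ∫⁻ x, W (x, y) ∂μ = 1 := by
    filter_upwards [ae_measure_fiber_ne_zero ν T] with y hy
    have := lintegral_div_measureReal_fiber μ hT (fun s => hw s (T y)) (fun s => hz₁ s (T y))
      (hpos hy) (hw₂ (T y))
    simpa only [hW, mul_comm] using this
  refine ⟨(μ.prod ν).withDensity W, ⟨?_, ?_⟩, fun φ hφ => ?_⟩
  · refine Measure.ext_of_lintegral _ fun f hf => ?_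
    have hf' : Measurable fun z : X × X => f z.1 := hf.comp measurable_fst
    rw [lintegral_map hf measurable_fst,
      lintegral_withDensity_eq_lintegral_mul _ hWm hf',
      lintegral_prod _ (hWm.mul hf').aemeasurable]
    refine lintegral_congr_ae ?_
    filter_upwards [hfst] with x hx
    simp only [Pi.mul_apply]
    have hWx : Measurable fun y => W (x, y) := hWm.comp measurable_prodMk_left
    rw [lintegral_mul_const _ hWx, hx, one_mul]
  · refine Measure.ext_of_lintegral _ fun f hf => ?_
    have hf' : Measurable fun z : X × X => f z.2 := hf.comp measurable_snd
    rw [lintegral_map hf measurable_snd,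
      lintegral_withDensity_eq_lintegral_mul _ hWm hf',
      lintegral_prod_symm _ (hWm.mul hf').aemeasurable]
    refine lintegral_congr_ae ?_
    filter_upwards [hsnd] with y hy
    simp only [Pi.mul_apply]
    have hWy : Measurable fun x => W (x, y) := hWm.comp measurable_prodMk_right
    rw [lintegral_mul_const _ hWy, hy, one_mul]
  · have hφm : Measurable fun z : X × X => ENNReal.ofReal (φ (T z.1) (T z.2)) :=
      (measurable_of_countable fun z : S × S => ENNReal.ofReal (φ z.1 z.2)).comp
        ((hT.comp measurable_fst).prodMk (hT.comp measurable_snd))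
    rw [lintegral_withDensity_eq_lintegral_mul _ hWm hφm,
      lintegral_prod _ (hWm.mul hφm).aemeasurable]
    simp only [Pi.mul_apply, hW]
    simp_rw [fun x => lintegral_comp_eq_sum ν hT fun t => ENNReal.ofReal
      (w (T x) t / (μ.real (T ⁻¹' {T x}) * ν.real (T ⁻¹' {t}))) * ENNReal.ofReal (φ (T x) t)]
    rw [lintegral_comp_eq_sum μ hT fun s => ∑ t, ENNReal.ofReal
      (w s t / (μ.real (T ⁻¹' {s}) * ν.real (T ⁻¹' {t}))) * ENNReal.ofReal (φ s t) *
        ν (T ⁻¹' {t}), ENNReal.ofReal_sum_of_nonneg fun s _ =>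
        Finset.sum_nonneg fun t _ => mul_nonneg (hw s t) (hφ s t)]
    refine Finset.sum_le_sum fun s _ => ?_
    rw [ENNReal.ofReal_sum_of_nonneg fun t _ => mul_nonneg (hw s t) (hφ s t), Finset.sum_mul]
    refine Finset.sum_le_sum fun t _ => ?_
    have h1 := hw s t
    have h2 := hφ s t
    rw [← ofReal_measureReal (μ := ν), ← ofReal_measureReal (μ := μ),
      ← ENNReal.ofReal_mul (by positivity), ← ENNReal.ofReal_mul (by positivity),
      ← ENNReal.ofReal_mul (by positivity)]
    refine ENNReal.ofReal_le_ofReal ?_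
    by_cases hμ : μ.real (T ⁻¹' {s}) = 0
    · simp [hμ, hz₁ s t hμ]
    by_cases hν : ν.real (T ⁻¹' {t}) = 0
    · simp [hν, hz₂ s t hν]
    apply le_of_eq
    field_simp

end Quantization

theorem integral_comp_eq_sum {X S : Type*} [MeasurableSpace X] [Fintype S] [MeasurableSpace S]
    [MeasurableSingletonClass S] (μ : Measure X) [IsFiniteMeasure μ] {T : X → S}
    (hT : Measurable T) (φ : S → ℝ) : ∫ x, φ (T x) ∂μ = ∑ s, φ s * μ.real (T ⁻¹' {s}) := by
  rw [← integral_map hT.aemeasurable (measurable_of_countable φ).aestronglyMeasurable,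
    integral_fintype Integrable.of_finite]
  refine Finset.sum_congr rfl fun s _ => ?_
  rw [map_measureReal_apply hT (measurableSet_singleton s), smul_eq_mul, mul_comm]

/-- Kantorovich–Rubinstein duality up to the error made by a quantizer with finite range. -/
theorem wassersteinDist_le_of_quantizer {X : Type*} [MeasurableSpace X]
    [MeasurableSingletonClass X] {d : X → X → ℝ} (hd : IsPseudoMetricCost d) {μ ν : Measure X}
    [IsProbabilityMeasure μ] [IsProbabilityMeasure ν] {c ε : ℝ} (hc : 0 ≤ c) (hε : 0 ≤ ε)
    (h : ∀ f, IsTestFunction d f → ∫ x, f x ∂μ - ∫ x, f x ∂ν ≤ c)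
    {T : X → X} (hT : Measurable T) (hfin : (Set.range T).Finite)
    (hμ : ∫⁻ x, ENNReal.ofReal (d x (T x)) ∂μ ≤ ENNReal.ofReal ε)
    (hν : ∫⁻ x, ENNReal.ofReal (d x (T x)) ∂ν ≤ ENNReal.ofReal ε) :
    wassersteinDist 1 d μ ν ≤ ENNReal.ofReal (c + 4 * ε) := by
  let S := Set.range T
  have : Fintype S := hfin.fintype
  have : Nonempty S := ⟨⟨_, Set.mem_range_self (μ.nonempty_of_neZero).some⟩⟩
  let T' : X → S := fun x => ⟨T x, Set.mem_range_self x⟩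
  have hT' : Measurable T' := hT.subtype_mk
  have hdT : Measurable fun x => d x (T x) := hd.measurable.comp (measurable_id.prodMk hT)
  have hquant : ∀ {ρ : Measure X}, ∫⁻ x, ENNReal.ofReal (d x (T x)) ∂ρ ≤ ENNReal.ofReal ε →
      Integrable (fun x => d x (T x)) ρ ∧ ∫ x, d x (T x) ∂ρ ≤ ε := by
    intro ρ hρ
    have hnn : 0 ≤ᵐ[ρ] fun x => d x (T x) := Filter.Eventually.of_forall fun x => hd.nonneg _ _
    have hi : Integrable (fun x => d x (T x)) ρ :=
      ⟨hdT.aestronglyMeasurable, (hasFiniteIntegral_iff_ofReal hnn).2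
        (hρ.trans_lt ENNReal.ofReal_lt_top)⟩
    rw [← ofReal_integral_eq_lintegral_ofReal hi hnn, ENNReal.ofReal_le_ofReal_iff hε] at hρ
    exact ⟨hi, hρ⟩
  have hsum : ∀ (ρ : Measure X) [IsProbabilityMeasure ρ], ∑ s, ρ.real (T' ⁻¹' {s}) = 1 := by
    intro ρ _
    simpa using (integral_comp_eq_sum ρ hT' fun _ => 1).symm
  obtain ⟨w, hw, hw₁, hw₂, hwc⟩ := exists_transport_plan_of_finite
    (d := fun s t : S => d s t) (c := c + 2 * ε) (fun s => hd.self s)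
    (fun _ _ _ => hd.triangle _ _ _) (fun s => measureReal_nonneg (μ := μ) (s := T' ⁻¹' {s}))
    (fun s => measureReal_nonneg (μ := ν) (s := T' ⁻¹' {s})) (hsum μ) (hsum ν) (by
      intro g hg
      obtain ⟨F, hFl, hFle, hleF, hFeq⟩ :=
        exists_lipschitz_between hd.triangle (fun s : S => (s : X)) g
      have hFg : ∀ s : S, F s = g s := fun s => le_antisymm
        (by simpa [hd.self] using hFle s s) (hleF s _ fun t => by linarith [hg s t])
      set A := Finset.univ.sup' Finset.univ_nonempty g
      set B := Finset.univ.inf' Finset.univ_nonempty g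
      have hA : ∀ s, g s ≤ A := fun s => Finset.le_sup' g (Finset.mem_univ s)
      have hB : ∀ s, B ≤ g s := fun s => Finset.inf'_le g (Finset.mem_univ s)
      have hBA : B ≤ A := (hB (Classical.arbitrary S)).trans (hA _)
      have hFm : Measurable F := by
        have hF : F = Finset.univ.inf' Finset.univ_nonempty fun (t : S) x => d x t + g t := by
          ext x
          rw [hFeq, Finset.inf'_apply]
        rw [hF]
        exact Finset.inf'_induction _ _ (fun _ hf _ hg => hf.inf hg) fun t _ =>
          (hd.measurable.comp (measurable_id.prodMk measurable_const)).add_const _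
      have htest : IsTestFunction d fun x => min (F x) A :=
        { measurable := hFm.min measurable_const
          bounded := ⟨max |B| |A|, fun x => abs_le_max_abs_abs (le_min
            (hleF x B fun t => by linarith [hd.nonneg x t, hB t]) hBA) (min_le_right _ _)⟩
          sub_le := fun x y => by
            rcases le_total (F y) A with hy | hy
            · rw [min_eq_left hy]
              exact (sub_le_sub_right (min_le_left _ _) _).trans (hFl x y)
            · rw [min_eq_right hy]
              linarith [min_le_right (F x) A, hd.nonneg x y] }
      have hval : ∀ x, min (F (T x)) A = g (T' x) := fun x => by
        rw [show T x = (T' x : X) from rfl, hFg, min_eq_left (hA _)]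
      have hgi : ∀ (ρ : Measure X) [IsProbabilityMeasure ρ],
          Integrable (fun x => g (T' x)) ρ := fun ρ _ => by
        simp_rw [← hval]
        exact Integrable.of_bound (htest.measurable.comp hT).aestronglyMeasurable _
          (Filter.Eventually.of_forall fun x => htest.bounded.choose_spec _)
      rw [← integral_comp_eq_sum μ hT', ← integral_comp_eq_sum ν hT']
      have h1 : ∫ x, g (T' x) ∂μ ≤ ∫ x, min (F x) A ∂μ + ∫ x, d x (T x) ∂μ := by
        rw [← integral_add (htest.integrable μ) (hquant hμ).1]
        refine integral_mono (hgi μ) ((htest.integrable μ).add (hquant hμ).1) fun x => ?_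
        have := htest.sub_le (T x) x
        rw [hval, hd.comm] at this
        change g (T' x) ≤ min (F x) A + d x (T x)
        linarith
      have h2 : ∫ x, min (F x) A ∂ν ≤ ∫ x, g (T' x) ∂ν + ∫ x, d x (T x) ∂ν := by
        rw [← integral_add (hgi ν) (hquant hν).1]
        refine integral_mono (htest.integrable ν) ((hgi ν).add (hquant hν).1) fun x => ?_
        have := htest.sub_le x (T x)
        rw [hval] at this
        change min (F x) A ≤ g (T' x) + d x (T x)
        linarith
      linarith [h _ htest, (hquant hμ).2, (hquant hν).2])
  obtain ⟨π, hπ, hπc⟩ := exists_isCoupling_of_transport_plan μ ν hT' hw hw₁ hw₂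
  rw [wassersteinDist_one]
  refine (iInf₂_le π hπ).trans ?_
  have hdTm : Measurable fun x => ENNReal.ofReal (d x (T x)) := hdT.ennreal_ofReal
  have h₁ : Measurable fun z : X × X => ENNReal.ofReal (d z.1 (T z.1)) := hdTm.comp measurable_fst
  have h₂ : Measurable fun z : X × X => ENNReal.ofReal (d z.2 (T z.2)) := hdTm.comp measurable_snd
  have h₁₂ : Measurable fun z : X × X =>
      ENNReal.ofReal (d z.1 (T z.1)) + ENNReal.ofReal (d z.2 (T z.2)) := h₁.add h₂
  calc ∫⁻ z, ENNReal.ofReal (d z.1 z.2) ∂π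
      ≤ ∫⁻ z, (ENNReal.ofReal (d z.1 (T z.1)) + ENNReal.ofReal (d z.2 (T z.2)) +
          ENNReal.ofReal (d (T' z.1) (T' z.2))) ∂π := by
        refine lintegral_mono fun z => ?_
        rw [← ENNReal.ofReal_add (hd.nonneg _ _) (hd.nonneg _ _),
          ← ENNReal.ofReal_add (add_nonneg (hd.nonneg _ _) (hd.nonneg _ _)) (hd.nonneg _ _)]
        refine ENNReal.ofReal_le_ofReal ?_
        have h1 := hd.triangle z.1 (T z.1) z.2
        have h2 := hd.triangle (T z.1) (T z.2) z.2
        rw [hd.comm (T z.2)] at h2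
        change _ ≤ _ + _ + d (T z.1) (T z.2)
        linarith
    _ = ∫⁻ z, ENNReal.ofReal (d z.1 (T z.1)) ∂π + ∫⁻ z, ENNReal.ofReal (d z.2 (T z.2)) ∂π +
          ∫⁻ z, ENNReal.ofReal (d (T' z.1) (T' z.2)) ∂π := by
        rw [lintegral_add_left h₁₂, lintegral_add_left h₁]
    _ ≤ ENNReal.ofReal ε + ENNReal.ofReal ε + ENNReal.ofReal (c + 2 * ε) := by
        gcongr
        · rwa [← lintegral_map hdTm measurable_fst, hπ.1]
        · rwa [← lintegral_map hdTm measurable_snd, hπ.2]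
        · exact (hπc (fun s t => d s t) fun _ _ => hd.nonneg _ _).trans
            (ENNReal.ofReal_le_ofReal hwc)
    _ = ENNReal.ofReal (c + 4 * ε) := by
        rw [← ENNReal.ofReal_add hε hε, ← ENNReal.ofReal_add (by positivity) (by positivity)]
        congr 1
        ring

theorem lintegral_ofReal_le_of_integral_min_le {X : Type*} [MeasurableSpace X] {μ : Measure X}
    [IsFiniteMeasure μ] {φ : X → ℝ} (hφ : Measurable φ) (h0 : ∀ x, 0 ≤ φ x) {M : ℝ}
    (h : ∀ N : ℕ, ∫ x, min (φ x) N ∂μ ≤ M) :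
    ∫⁻ x, ENNReal.ofReal (φ x) ∂μ ≤ ENNReal.ofReal M := by
  have hm : ∀ N : ℕ, Measurable fun x => min (φ x) (N : ℝ) := fun N => hφ.min measurable_const
  have hlim : Filter.Tendsto (fun N : ℕ => ∫⁻ x, ENNReal.ofReal (min (φ x) N) ∂μ) Filter.atTop
      (nhds (∫⁻ x, ENNReal.ofReal (φ x) ∂μ)) := by
    refine lintegral_tendsto_of_tendsto_of_monotone (fun N => (hm N).ennreal_ofReal.aemeasurable)
      (Filter.Eventually.of_forall fun x m n hmn => ENNReal.ofReal_le_ofReal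
        (min_le_min_left _ (by exact_mod_cast hmn)))
      (Filter.Eventually.of_forall fun x => tendsto_const_nhds.congr' ?_)
    filter_upwards [Filter.eventually_ge_atTop ⌈φ x⌉₊] with N hN
    rw [min_eq_left (Nat.ceil_le.1 hN)]
  refine le_of_tendsto' hlim fun N => ?_
  have hnn : ∀ x, 0 ≤ min (φ x) (N : ℝ) := fun x => le_min (h0 x) (Nat.cast_nonneg N)
  have hint : Integrable (fun x => min (φ x) (N : ℝ)) μ :=
    Integrable.of_bound (hm N).aestronglyMeasurable N (Filter.Eventually.of_forall fun x => by
      rw [Real.norm_of_nonneg (hnn x)]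
      exact min_le_right _ _)
  rw [← ofReal_integral_eq_lintegral_ofReal hint (Filter.Eventually.of_forall hnn)]
  exact ENNReal.ofReal_le_ofReal (h N)

/-- The truncated distance to a point is a test function. -/
theorem IsPseudoMetricCost.isTestFunction_min {X : Type*} [MeasurableSpace X] {d : X → X → ℝ}
    (hd : IsPseudoMetricCost d) (x₀ : X) (N : ℕ) :
    IsTestFunction d fun x => min (d x₀ x) N where
  measurable := (hd.measurable.comp measurable_prodMk_left).min measurable_const
  bounded := ⟨N, fun x => by
    rw [abs_of_nonneg (le_min (hd.nonneg _ _) (Nat.cast_nonneg N))]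
    exact min_le_right _ _⟩
  sub_le x y := by
    rcases le_total (d x₀ y) N with hy | hy
    · rw [min_eq_left hy]
      have := hd.triangle x₀ y x
      rw [hd.comm y x] at this
      linarith [min_le_left (d x₀ x) (N : ℝ)]
    · rw [min_eq_right hy]
      linarith [min_le_right (d x₀ x) (N : ℝ), hd.nonneg x y]

section BobkovGotze

variable {X : Type*} [MeasurableSpace X] {d : X → X → ℝ} {A : ℝ} {P : Measure X}
  [IsProbabilityMeasure P]

/-- The Laplace bound controls the first moment. -/
theorem IsPseudoMetricCost.exists_integral_min_le_of_laplace (hd : IsPseudoMetricCost d)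
    (hLap : ∀ l, 0 ≤ l → ∀ f, IsTestFunction (fun x y => l * d x y) f →
      ∫ x, Real.exp (f x) ∂P ≤ Real.exp (∫ x, f x ∂P + A * l ^ 2 / 2)) (x₀ : X) :
    ∃ M, ∀ N : ℕ, ∫ x, min (d x₀ x) N ∂P ≤ M := by
  have hdm : Measurable fun x => d x₀ x := hd.measurable.comp measurable_prodMk_left
  have hint : Integrable (fun x => Real.exp (-d x₀ x)) P :=
    Integrable.of_bound hdm.neg.exp.aestronglyMeasurable 1 (Filter.Eventually.of_forall fun x => by
      simpa using hd.nonneg x₀ x)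
  have hpos : 0 < ∫ x, Real.exp (-d x₀ x) ∂P := integral_exp_pos hint
  refine ⟨A / 2 - Real.log (∫ x, Real.exp (-d x₀ x) ∂P), fun N => ?_⟩
  have hf := hd.isTestFunction_min x₀ N
  have hneg := hf.neg hd.comm
  have h1 := hLap 1 zero_le_one _ (by simpa using hneg)
  have h2 : ∫ x, Real.exp (-d x₀ x) ∂P ≤ ∫ x, Real.exp (-min (d x₀ x) N) ∂P :=
    integral_mono hint (hneg.integrable_exp P) fun x =>
      Real.exp_le_exp.2 (neg_le_neg (min_le_left _ _))
  have h3 := (Real.log_le_iff_le_exp hpos).2 (h2.trans h1)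
  rw [integral_neg] at h3
  linarith

theorem IsTestFunction.integral_sub_le_sqrt_of_laplace (hA : 0 < A)
    (hLap : ∀ l, 0 ≤ l → ∀ f, IsTestFunction (fun x y => l * d x y) f →
      ∫ x, Real.exp (f x) ∂P ≤ Real.exp (∫ x, f x ∂P + A * l ^ 2 / 2))
    {f : X → ℝ} (hf : IsTestFunction d f) (Q : Measure X) [IsProbabilityMeasure Q]
    (hH : relEntropy Q P ≠ ∞) :
    ∫ x, f x ∂Q - ∫ x, f x ∂P ≤ √(2 * A * (relEntropy Q P).toReal) := by
  set D := ∫ x, f x ∂Q - ∫ x, f x ∂P with hD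
  rcases le_or_gt D 0 with h0 | h0
  · exact h0.trans (Real.sqrt_nonneg _)
  have hl : 0 ≤ D / A := by positivity
  have hlf := hf.const_mul hl
  have h1 := hlf.integral_le_relEntropy_add_log Q P hH
  have h2 := (Real.log_le_iff_le_exp (integral_exp_pos (hlf.integrable_exp P))).2 (hLap _ hl _ hlf)
  rw [integral_const_mul] at h1 h2
  have h3 : D / A * D ≤ (relEntropy Q P).toReal + A * (D / A) ^ 2 / 2 := by
    nth_rewrite 2 [hD]
    linarith
  refine Real.le_sqrt_of_sq_le ?_
  have h4 : D / A * D - A * (D / A) ^ 2 / 2 = D ^ 2 / (2 * A) := by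
    field_simp
    ring
  have h5 : D ^ 2 / (2 * A) ≤ (relEntropy Q P).toReal := by linarith
  rw [div_le_iff₀ (by positivity)] at h5
  linarith

/-- The Bobkov–Götze criterion: sub-Gaussian Laplace transforms of Lipschitz functions imply
`T₁`, on a space which can be quantized by maps with finite range. -/
theorem IsPseudoMetricCost.tpIneq_of_laplace [MeasurableSingletonClass X]
    (hd : IsPseudoMetricCost d) (hA : 0 < A)
    (hLap : ∀ l, 0 ≤ l → ∀ f, IsTestFunction (fun x y => l * d x y) f →
      ∫ x, Real.exp (f x) ∂P ≤ Real.exp (∫ x, f x ∂P + A * l ^ 2 / 2))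
    (x₀ : X) {T : ℕ → X → X} (hT : ∀ k, Measurable (T k)) (hfin : ∀ k, (Set.range (T k)).Finite)
    (hle : ∀ k x, d x (T k x) ≤ d x₀ x)
    (hlim : ∀ x, Filter.Tendsto (fun k => d x (T k x)) Filter.atTop (nhds 0)) :
    TpIneq 1 d A P := by
  intro Q _
  by_cases hH : relEntropy Q P = ∞
  · rw [hH, ENNReal.mul_top (by simpa using hA)]
    exact le_top
  set c := √(2 * A * (relEntropy Q P).toReal)
  have hdual : ∀ f, IsTestFunction d f → ∫ x, f x ∂Q - ∫ x, f x ∂P ≤ c := fun f hf =>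
    hf.integral_sub_le_sqrt_of_laplace hA hLap Q hH
  have hdm : Measurable fun x => d x₀ x := hd.measurable.comp measurable_prodMk_left
  obtain ⟨M, hM⟩ := hd.exists_integral_min_le_of_laplace hLap x₀
  have hMQ : ∀ N : ℕ, ∫ x, min (d x₀ x) N ∂Q ≤ c + M := fun N => by
    linarith [hM N, hdual _ (hd.isTestFunction_min x₀ N)]
  have hzero : ∀ (ρ : Measure X) [IsProbabilityMeasure ρ] (M' : ℝ),
      (∀ N : ℕ, ∫ x, min (d x₀ x) N ∂ρ ≤ M') → Filter.Tendsto
        (fun k => ∫⁻ x, ENNReal.ofReal (d x (T k x)) ∂ρ) Filter.atTop (nhds 0) := by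
    intro ρ _ M' hM'
    have := tendsto_lintegral_of_dominated_convergence (μ := ρ)
      (F := fun k x => ENNReal.ofReal (d x (T k x))) (f := fun _ => 0)
      (fun x => ENNReal.ofReal (d x₀ x))
      (fun k => (hd.measurable.comp (measurable_id.prodMk (hT k))).ennreal_ofReal)
      (fun k => Filter.Eventually.of_forall fun x => ENNReal.ofReal_le_ofReal (hle k x))
      ((lintegral_ofReal_le_of_integral_min_le hdm (hd.nonneg x₀) hM').trans_lt
        ENNReal.ofReal_lt_top).ne
      (Filter.Eventually.of_forall fun x => by
        simpa using ENNReal.tendsto_ofReal (hlim x))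
    simpa using this
  have hW : ∀ ε : ℝ, 0 < ε → wassersteinDist 1 d P Q ≤ ENNReal.ofReal (c + 4 * ε) := by
    intro ε hε
    have hε' : (0 : ℝ≥0∞) < ENNReal.ofReal ε := ENNReal.ofReal_pos.2 hε
    obtain ⟨k, hk₁, hk₂⟩ := (((hzero P M hM).eventually_le_const hε').and
      ((hzero Q _ hMQ).eventually_le_const hε')).exists
    refine wassersteinDist_le_of_quantizer hd (Real.sqrt_nonneg _) hε.le (fun f hf => ?_) (hT k)
      (hfin k) hk₁ hk₂
    have := hdual _ (hf.neg hd.comm)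
    rw [integral_neg, integral_neg] at this
    linarith
  have hWc : wassersteinDist 1 d P Q ≤ ENNReal.ofReal c := by
    have ht : Filter.Tendsto (fun ε : ℝ => ENNReal.ofReal (c + 4 * ε))
        (nhdsWithin 0 (Set.Ioi 0)) (nhds (ENNReal.ofReal c)) := by
      have : Filter.Tendsto (fun ε : ℝ => c + 4 * ε) (nhds 0) (nhds c) := by
        have h : Continuous fun ε : ℝ => c + 4 * ε := by fun_prop
        simpa using h.tendsto 0
      exact ENNReal.tendsto_ofReal (this.mono_left nhdsWithin_le_nhds)
    exact ge_of_tendsto ht (Filter.eventually_of_mem self_mem_nhdsWithin hW)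
  calc wassersteinDist 1 d P Q ^ 2 ≤ ENNReal.ofReal c ^ 2 := by gcongr
    _ = ENNReal.ofReal (2 * A) * relEntropy Q P := by
        rw [← ENNReal.ofReal_pow (Real.sqrt_nonneg _), Real.sq_sqrt (by positivity),
          ENNReal.ofReal_mul (by positivity), ENNReal.ofReal_toReal hH]

end BobkovGotze

section Polish

variable {E : Type*} [MeasurableSpace E] [MetricSpace E] [SecondCountableTopology E] [BorelSpace E]

theorem isPseudoMetricCost_sum_dist (n : ℕ) :
    IsPseudoMetricCost fun x y : Fin n → E => ∑ i, dist (x i) (y i) where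
  self x := by simp
  comm x y := by simp_rw [dist_comm]
  triangle x y z := by
    rw [← Finset.sum_add_distrib]
    exact Finset.sum_le_sum fun i _ => dist_triangle _ _ _
  measurable := by fun_prop

/-- The Bobkov–Götze criterion for the `l₁` product distance. -/
theorem tpIneq_sum_dist_of_laplace [Nonempty E] {n : ℕ} {A : ℝ} (hA : 0 < A)
    {P : Measure (Fin n → E)} [IsProbabilityMeasure P]
    (hLap : ∀ l, 0 ≤ l → ∀ f : (Fin n → E) → ℝ,
      IsTestFunction (fun x y => l * ∑ i, dist (x i) (y i)) f →
      ∫ x, Real.exp (f x) ∂P ≤ Real.exp (∫ x, f x ∂P + A * l ^ 2 / 2)) :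
    TpIneq 1 (fun x y : Fin n → E => ∑ i, dist (x i) (y i)) A P := by
  let e := TopologicalSpace.denseSeq E
  refine (isPseudoMetricCost_sum_dist n).tpIneq_of_laplace hA hLap (fun _ => e 0)
    (T := fun k x i => SimpleFunc.nearestPt e k (x i)) (fun k => ?_) (fun k => ?_) (fun k x => ?_)
    fun x => ?_
  · exact measurable_pi_lambda _ fun i =>
      (SimpleFunc.nearestPt e k).measurable.comp (measurable_pi_apply i)
  · refine (Set.Finite.pi' fun _ : Fin n => (SimpleFunc.nearestPt e k).finite_range).subset ?_
    rintro _ ⟨x, rfl⟩ i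
    exact Set.mem_range_self _
  · refine Finset.sum_le_sum fun i _ => ?_
    have := SimpleFunc.edist_nearestPt_le e (x i) (Nat.zero_le k)
    rw [edist_dist, edist_dist, ENNReal.ofReal_le_ofReal_iff dist_nonneg] at this
    rwa [dist_comm]
  · have : ∀ i, Filter.Tendsto (fun k => dist (x i) (SimpleFunc.nearestPt e k (x i)))
        Filter.atTop (nhds 0) := fun i => by
      have h := SimpleFunc.tendsto_nearestPt (e := e) (x := x i)
        (TopologicalSpace.denseRange_denseSeq E (x i))
      simpa using (tendsto_const_nhds (x := x i)).dist h
    simpa using tendsto_finsetSum Finset.univ fun i _ => this i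

end Polish

theorem exists_weights {n : ℕ} [NeZero n] {a : ℕ → ℝ} (ha : ∀ j, 0 ≤ a j) {δ : ℝ} (hδ : 0 < δ)
    (hδ1 : δ < 1) :
    ∃ z : Fin n → ℝ, (∀ i, 0 < z i) ∧ (∑ i, z i) = 1 ∧
      ∀ k : Fin n, (∑ i ∈ Finset.Ioi k, z i * a ((i : ℕ) - (k : ℕ))) ≤ δ * z k := by
  set S := ∑ m ∈ Finset.range n, a m with hS
  have hS0 : 0 ≤ S := Finset.sum_nonneg fun m _ => ha m
  set r := δ / (1 + S) with hr
  have hr0 : 0 < r := by positivity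
  have hr1 : r ≤ 1 := by
    rw [hr, div_le_one (by positivity)]
    linarith
  have hrS : r * S ≤ δ := by
    rw [hr, div_mul_eq_mul_div, div_le_iff₀ (by positivity)]
    nlinarith
  set Z := ∑ i : Fin n, r ^ (i : ℕ) with hZ
  have hZ0 : 0 < Z := Finset.sum_pos (fun i _ => by positivity) Finset.univ_nonempty
  refine ⟨fun i => r ^ (i : ℕ) / Z, fun i => by positivity, ?_, fun k => ?_⟩
  · rw [← Finset.sum_div, div_self hZ0.ne']
  have h1 : ∑ i ∈ Finset.Ioi k, a ((i : ℕ) - (k : ℕ)) ≤ S := by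
    rw [hS, ← Finset.sum_image (s := Finset.Ioi k) (g := fun i : Fin n => (i : ℕ) - (k : ℕ))
      (f := a)]
    · refine Finset.sum_le_sum_of_subset_of_nonneg ?_ fun m _ _ => ha m
      intro m hm
      obtain ⟨i, -, rfl⟩ := Finset.mem_image.1 hm
      exact Finset.mem_range.2 (by omega)
    · intro i hi j hj hij
      simp only [Finset.coe_Ioi, Set.mem_Ioi, Fin.lt_def] at hi hj hij
      exact Fin.ext (by omega)
  calc ∑ i ∈ Finset.Ioi k, r ^ (i : ℕ) / Z * a ((i : ℕ) - (k : ℕ))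
      ≤ ∑ i ∈ Finset.Ioi k, r ^ ((k : ℕ) + 1) / Z * a ((i : ℕ) - (k : ℕ)) := by
        refine Finset.sum_le_sum fun i hi => mul_le_mul_of_nonneg_right ?_ (ha _)
        refine div_le_div_of_nonneg_right (pow_le_pow_of_le_one hr0.le hr1 ?_) hZ0.le
        exact Fin.lt_def.1 (Finset.mem_Ioi.1 hi)
    _ = r ^ (k : ℕ) / Z * (r * ∑ i ∈ Finset.Ioi k, a ((i : ℕ) - (k : ℕ))) := by
        rw [← Finset.mul_sum]
        ring
    _ ≤ r ^ (k : ℕ) / Z * δ := by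
        refine mul_le_mul_of_nonneg_left ?_ (by positivity)
        exact (mul_le_mul_of_nonneg_left h1 hr0.le).trans hrS
    _ = δ * (r ^ (k : ℕ) / Z) := mul_comm _ _

theorem tpIneq_chainMeasure_of_weights {E : Type*} [MeasurableSpace E] [MetricSpace E]
    [SecondCountableTopology E] [BorelSpace E] {C : ℝ} (hC : 0 < C) {n : ℕ} [NeZero n]
    {K : (i : ℕ) → (Fin i → E) → Measure E}
    (hKm : ∀ i, Measurable (K i)) (hKp : ∀ i x, IsProbabilityMeasure (K i x))
    (hT : ∀ (i : ℕ) (x : Fin i → E), TpIneq 1 dist C (K i x))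
    {a : ℕ → ℝ} (ha : ∀ j, 0 ≤ a j)
    (hC1 : ∀ (i : ℕ) (x x' : Fin i → E),
      wassersteinDist 1 dist (K i x) (K i x') ≤
        ENNReal.ofReal (∑ k : Fin i, a (i - (k : ℕ)) * dist (x k) (x' k)))
    {δ : ℝ} (hδ1 : δ < 1) {z : Fin n → ℝ} (hz : ∀ i, 0 < z i)
    (hz1 : ∑ i, z i = 1)
    (hza : ∀ k : Fin n, (∑ i ∈ Finset.Ioi k, z i * a ((i : ℕ) - (k : ℕ))) ≤ δ * z k) :
    0 < (1 - δ) * ⨅ i, z i ∧ 0 < ⨆ i, z i ∧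
    TpIneq 1 (fun x y : Fin n → E => ∑ i, dist (x i) (y i))
      (C * (⨆ i, z i) / ((1 - δ) * ⨅ i, z i) ^ 2) (chainMeasure K n) := by
  have hP := isProbabilityMeasure_chainMeasure hKm hKp n
  have hE : Nonempty E := have := hKp 0 Fin.elim0; (K 0 Fin.elim0).nonempty_of_neZero
  set m := ⨅ i, z i with hm
  have hmle : ∀ i, m ≤ z i := fun i => ciInf_le (Set.finite_range z).bddBelow i
  have hleM : ∀ i, z i ≤ ⨆ i, z i := fun i => le_ciSup (Set.finite_range z).bddAbove i
  have hm0 : 0 < m := by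
    obtain ⟨i, hi⟩ := exists_eq_ciInf_of_finite (f := z)
    rw [hm, ← hi]
    exact hz i
  have hM0 : 0 < ⨆ i, z i := (hz 0).trans_le (hleM 0)
  have hb : 0 < (1 - δ) * m := mul_pos (by linarith) hm0
  refine ⟨hb, hM0, tpIneq_sum_dist_of_laplace (by positivity) fun l hl f hf => ?_⟩
  refine (integral_exp_chainMeasure_le hC.le hKm hKp hT ha hC1 n (fun _ => l)
    (fun k => l * z k / ((1 - δ) * m)) (fun _ => hl) (fun k => ?_) f
    (by simpa only [Finset.mul_sum] using hf)).trans ?_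
  · have h1 : ∑ i ∈ Finset.Ioi k, l * z i / ((1 - δ) * m) * a ((i : ℕ) - (k : ℕ)) =
        l / ((1 - δ) * m) * ∑ i ∈ Finset.Ioi k, z i * a ((i : ℕ) - (k : ℕ)) := by
      rw [Finset.mul_sum]
      exact Finset.sum_congr rfl fun i _ => by ring
    have h2 : l = l / ((1 - δ) * m) * ((1 - δ) * m) := (div_mul_cancel₀ l hb.ne').symm
    have h3 : (1 - δ) * m + ∑ i ∈ Finset.Ioi k, z i * a ((i : ℕ) - (k : ℕ)) ≤ z k := by
      have := mul_le_mul_of_nonneg_left (hmle k) (sub_nonneg.2 hδ1.le)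
      linarith [hza k]
    calc l + ∑ i ∈ Finset.Ioi k, l * z i / ((1 - δ) * m) * a ((i : ℕ) - (k : ℕ))
        = l / ((1 - δ) * m) *
            ((1 - δ) * m + ∑ i ∈ Finset.Ioi k, z i * a ((i : ℕ) - (k : ℕ))) := by
          rw [h1, mul_add, ← h2]
      _ ≤ l / ((1 - δ) * m) * z k := mul_le_mul_of_nonneg_left h3 (by positivity)
      _ = l * z k / ((1 - δ) * m) := by ring
  · refine Real.exp_le_exp.2 (add_le_add le_rfl ?_)
    have h1 : ∑ i, z i ^ 2 ≤ ⨆ i, z i := by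
      calc ∑ i, z i ^ 2 ≤ ∑ i, (⨆ i, z i) * z i := Finset.sum_le_sum fun i _ => by
            rw [sq]
            exact mul_le_mul_of_nonneg_right (hleM i) (hz i).le
        _ = ⨆ i, z i := by rw [← Finset.mul_sum, hz1, mul_one]
    have h2 : ∑ i, (l * z i / ((1 - δ) * m)) ^ 2 = (l / ((1 - δ) * m)) ^ 2 * ∑ i, z i ^ 2 := by
      rw [Finset.mul_sum]
      exact Finset.sum_congr rfl fun i _ => by ring
    rw [h2]
    calc C / 2 * ((l / ((1 - δ) * m)) ^ 2 * ∑ i, z i ^ 2)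
        ≤ C / 2 * ((l / ((1 - δ) * m)) ^ 2 * ⨆ i, z i) := by gcongr
      _ = C * (⨆ i, z i) / ((1 - δ) * m) ^ 2 * l ^ 2 / 2 := by
        generalize (1 - δ) * m = b
        ring

/-- **Remark 2.9: tensorization of `T₁` without the contraction condition.** -/
theorem tensorization_T1_no_contraction
    {E : Type*} [MeasurableSpace E] [MetricSpace E] [CompleteSpace E]
    [SecondCountableTopology E] [BorelSpace E]
    (C : ℝ) (hC : 0 < C) (n : ℕ) [NeZero n]
    (K : (i : ℕ) → (Fin i → E) → Measure E)
    (hKm : ∀ i, Measurable (K i)) (hKp : ∀ i x, IsProbabilityMeasure (K i x))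
    (hT : ∀ (i : ℕ) (x : Fin i → E), TpIneq 1 dist C (K i x))
    (a : ℕ → ℝ) (ha : ∀ j, 0 ≤ a j)
    (hC1 : ∀ (i : ℕ) (x x' : Fin i → E),
      wassersteinDist 1 dist (K i x) (K i x') ≤
        ENNReal.ofReal (∑ k : Fin i, a (i - (k : ℕ)) * dist (x k) (x' k))) :
    (∀ δ : ℝ, 0 < δ → δ < 1 →
      (∃ z : Fin n → ℝ, (∀ i, 0 < z i) ∧ (∑ i, z i) = 1 ∧
        ∀ k : Fin n, (∑ i ∈ Finset.Ioi k, z i * a ((i : ℕ) - (k : ℕ))) ≤ δ * z k) ∧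
      ∀ z : Fin n → ℝ, (∀ i, 0 < z i) → (∑ i, z i) = 1 →
        (∀ k : Fin n, (∑ i ∈ Finset.Ioi k, z i * a ((i : ℕ) - (k : ℕ))) ≤ δ * z k) →
        ∀ Q : Measure (Fin n → E), IsProbabilityMeasure Q →
          wassersteinDist 1 (fun x y : Fin n → E => ∑ i, dist (x i) (y i)) Q
              (chainMeasure K n) ≤
            ENNReal.ofReal (1 / ((1 - δ) * ⨅ i, z i)) *
              (ENNReal.ofReal (2 * C * ⨆ i, z i) *
                relEntropy Q (chainMeasure K n)) ^ (1 / 2 : ℝ)) ∧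
    ∃ Cn : ℝ, TpIneq 1 (fun x y : Fin n → E => ∑ i, dist (x i) (y i)) Cn
      (chainMeasure K n) := by
  have hd := isPseudoMetricCost_sum_dist (E := E) n
  refine ⟨fun δ hδ hδ1 => ⟨exists_weights ha hδ hδ1, fun z hz hz1 hza Q hQ => ?_⟩, ?_⟩
  · obtain ⟨hb, hM, hTP⟩ :=
      tpIneq_chainMeasure_of_weights hC hKm hKp hT ha hC1 hδ1 hz hz1 hza
    rw [wassersteinDist_one_comm hd.comm hd.measurable]
    have hsq : ∀ u : ℝ≥0∞, (u ^ 2) ^ (1 / 2 : ℝ) = u := fun u => by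
      rw [← ENNReal.rpow_natCast, ← ENNReal.rpow_mul]
      norm_num
    have hA : 2 * (C * (⨆ i, z i) / ((1 - δ) * ⨅ i, z i) ^ 2) =
        (1 / ((1 - δ) * ⨅ i, z i)) ^ 2 * (2 * C * ⨆ i, z i) := by
      generalize (1 - δ) * ⨅ i, z i = b
      ring
    have h := ENNReal.rpow_le_rpow (hTP Q hQ) (one_half_pos (α := ℝ)).le
    rwa [hsq, hA, ENNReal.ofReal_mul (by positivity), mul_assoc,
      ENNReal.mul_rpow_of_nonneg _ _ (one_half_pos (α := ℝ)).le,
      ENNReal.ofReal_pow (by positivity), hsq] at h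
  · obtain ⟨z, hz, hz1, hza⟩ := exists_weights (n := n) ha (δ := 1 / 2) (by norm_num) (by norm_num)
    exact ⟨_, (tpIneq_chainMeasure_of_weights hC hKm hKp hT ha hC1 (by norm_num) hz hz1 hza).2.2⟩

end
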